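/- Let G be a finite nonabelian transitively commutative group with trivial center, let M_1, …, M_N be its maximal abelian subgroups, and let P be their free product (the coproduct in the category of groups). Then for every i > 0, the group cohomology H^i(P; ℤ) with trivial integer coefficients is isomorphic to ⊕_{p | |G|} ⊕_{Q ∈ Syl_p(G)} H^i(Q; ℤ), the direct sum over the primes p dividing |G| and over all Sylow p-subgroups Q of G of the group cohomology of Q with trivial integer coefficients. -/

import Mathlib

open scoped DirectSum

namespace TCP
open CategoryTheory Limits

variable {k : Type} [CommRing k]

/-- The coinduced module `Fun(G, A)`. -/
noncomputable abbrev coI {G : Type} [Group G] (A : Rep.{0} k G) : Rep.{0} k G :=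
  Rep.coind (⊥ : Subgroup G).subtype (Rep.res (⊥ : Subgroup G).subtype A)

noncomputable abbrev toCoI {G : Type} [Group G] (A : Rep.{0} k G) : A ⟶ coI A :=
  Rep.resCoindToHom (⊥ : Subgroup G).subtype A (Rep.res (⊥ : Subgroup G).subtype A) (𝟙 _)

lemma isZero_coI {G : Type} [Group G] (A : Rep.{0} k G) (n : ℕ) :
    IsZero (groupCohomology (coI A) (n+1)) :=
  (isZero_groupCohomology_succ_of_subsingleton _ n).of_iso (groupCohomology.coindIso _ (n+1))

lemma isZero_of_retract {G : Type} [Group G] {A B : Rep.{0} k G} (i : A ⟶ B) (r : B ⟶ A)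
    (h : i ≫ r = 𝟙 A) (n : ℕ) (hB : IsZero (groupCohomology B n)) :
    IsZero (groupCohomology A n) := by
  have h1 : (groupCohomology.functor k G n).map i ≫ (groupCohomology.functor k G n).map r = 𝟙 _ := by
    rw [← Functor.map_comp, h, CategoryTheory.Functor.map_id]
  rw [IsZero.iff_id_eq_zero]
  have h2 : (groupCohomology.functor k G n).map i = 0 := hB.eq_zero_of_tgt _
  rw [h2, zero_comp] at h1
  exact h1.symm

lemma mem_coindV_bot {G : Type} [Group G] (A : Rep.{0} k G) (f : G → A) :
    f ∈ Representation.coindV (⊥ : Subgroup G).subtype (Rep.res (⊥ : Subgroup G).subtype A).ρ := by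
  rintro ⟨g, hg⟩ h
  obtain rfl : g = 1 := hg
  simp

/-- retraction -/
lemma exists_retract {G H : Type} [Group G] [Group H] (φ : H →* G) (hφ : Function.Injective φ)
    (A : Rep.{0} k G) :
    ∃ r : coI (Rep.res φ (coI A)) ⟶ Rep.res φ (coI A), toCoI (Rep.res φ (coI A)) ≫ r = 𝟙 _ := by
  obtain ⟨t, ht⟩ : ∃ t : G → H, ∀ x h, t (x * φ h) = t x * h := by
    have h1 : ∀ x : G, ∃ h : H, x = (Quotient.out (QuotientGroup.mk x : G ⧸ φ.range)) * φ h := by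
      intro x
      obtain ⟨h, hh⟩ := QuotientGroup.mk_out_eq_mul φ.range x
      obtain ⟨y, hy⟩ := h.2
      refine ⟨y⁻¹, ?_⟩
      rw [hh, ← hy]; simp
    choose t ht using h1
    refine ⟨t, fun x h => hφ ?_⟩
    have h2 := ht (x * φ h)
    have h3 : (QuotientGroup.mk (x * φ h) : G ⧸ φ.range) = QuotientGroup.mk x := by
      rw [QuotientGroup.eq]; simp
    rw [h3] at h2
    conv_lhs at h2 => rw [ht x]
    rw [mul_assoc, mul_left_cancel_iff] at h2
    rw [← h2, map_mul]
  let L : (coI (Rep.res φ (coI A))) →ₗ[k] (Rep.res φ (coI A)) :=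
    { toFun := fun F => ⟨fun x => (F.1 (t x)).1 (x * (φ (t x))⁻¹), mem_coindV_bot A _⟩
      map_add' := fun F F' => by ext; rfl
      map_smul' := fun c F => by ext; rfl }
  refine ⟨Rep.ofHom ⟨L, fun h => ?_⟩, ?_⟩
  · ext F x
    change (F.1 (t x * h)).1 (x * (φ (t x))⁻¹) = (F.1 (t (x * φ h))).1 (x * φ h * (φ (t (x * φ h)))⁻¹)
    rw [ht]
    simp [mul_assoc]
  · ext F x
    change F.1 (x * (φ (t x))⁻¹ * φ (t x)) = F.1 x
    simp

lemma isZero_res_coI {G H : Type} [Group G] [Group H] (φ : H →* G) (hφ : Function.Injective φ)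
    (A : Rep.{0} k G) (n : ℕ) : IsZero (groupCohomology (Rep.res φ (coI A)) (n+1)) := by
  obtain ⟨r, hr⟩ := exists_retract φ hφ A
  exact isZero_of_retract _ r hr _ (isZero_coI _ _)

instance mono_toCoI {G : Type} [Group G] (A : Rep.{0} k G) : Mono (toCoI A) := by
  rw [Rep.mono_iff_injective]
  intro a b h
  have h1 := congrFun (congrArg Subtype.val h) 1
  change A.ρ 1 a = A.ρ 1 b at h1
  simpa using h1

noncomputable abbrev ses {G : Type} [Group G] (A : Rep.{0} k G) : ShortComplex (Rep.{0} k G) :=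
  ShortComplex.mk (toCoI A) (cokernel.π (toCoI A)) (cokernel.condition _)

lemma ses_exact {G : Type} [Group G] (A : Rep.{0} k G) : (ses A).ShortExact :=
  { exact := ShortComplex.exact_cokernel _
    mono_f := by dsimp; infer_instance
    epi_g := by dsimp; infer_instance }

lemma res_ses_exact {G H : Type} [Group G] [Group H] (φ : H →* G) (A : Rep.{0} k G) :
    ((ses A).map (Rep.resFunctor φ)).ShortExact := (Rep.shortExact_res φ).2 (ses_exact A)

/-- dimension shifting isomorphism -/
noncomputable def shiftRes {G H : Type} [Group G] [Group H] (φ : H →* G) (hφ : Function.Injective φ)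
    (A : Rep.{0} k G) (n : ℕ) :
    groupCohomology (Rep.res φ (cokernel (toCoI A))) (n+1) ≅ groupCohomology (Rep.res φ A) (n+2) :=
  @asIso _ _ _ _ (groupCohomology.δ (res_ses_exact φ A) (n+1) (n+2) rfl)
    (groupCohomology.isIso_δ_of_isZero (res_ses_exact φ A) (n+1)
    (isZero_res_coI φ hφ A n) (isZero_res_coI φ hφ A (n+1)))

end TCP

namespace TCP
open CategoryTheory Limits
variable {k : Type} [CommRing k]

section FreeProd
variable {ι : Type} {Gs : ι → Type} [∀ j, Group (Gs j)]

/-- Gluing property -/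
def Glue (A : Rep.{0} k (Monoid.CoprodI Gs)) : Prop :=
  ∀ a : ι → A, ∃ b : A, ∀ j (g : Gs j), A.ρ (Monoid.CoprodI.of g) (b - a j) = b - a j

/-- cocycles glue -/
lemma exists_cocycle (A : Rep.{0} k (Monoid.CoprodI Gs))
    (f : ∀ j, groupCohomology.cocycles₁ (Rep.res (Monoid.CoprodI.of (M := Gs) (i := j)) A)) :
    ∃ F : groupCohomology.cocycles₁ A, ∀ j g, F (Monoid.CoprodI.of (i := j) g) = f j g := by
  let Φj : ∀ j, Gs j →* Function.End A := fun j =>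
    { toFun := fun g a => A.ρ (Monoid.CoprodI.of g) a + f j g
      map_one' := by
        funext a
        change A.ρ (Monoid.CoprodI.of 1) a + f j 1 = a
        simp
      map_mul' := fun g h => by
        funext a
        have := (groupCohomology.mem_cocycles₁_iff (f j).1).1 (f j).2 g h
        change f j (g * h) = A.ρ (Monoid.CoprodI.of g) (f j h) + f j g at this
        change A.ρ (Monoid.CoprodI.of (g * h)) a + f j (g * h) =
          A.ρ (Monoid.CoprodI.of g) (A.ρ (Monoid.CoprodI.of h) a + f j h) + f j g
        rw [this, map_mul, map_mul, map_add, add_assoc]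
        rfl }
  let Φ : Monoid.CoprodI Gs →* Function.End A := Monoid.CoprodI.lift Φj
  have hΦ : ∀ p a, Φ p a = A.ρ p a + Φ p 0 := by
    intro p
    induction p using Monoid.CoprodI.induction_on with
    | one =>
      intro a
      rw [map_one, map_one]
      change a = a + 0
      simp
    | of j g => 
      intro a
      simp only [Φ, Monoid.CoprodI.lift_of]
      change _ + _ = _ + (A.ρ _ 0 + _)
      simp
    | mul x y hx hy =>
      intro a
      have : ∀ b, Φ (x*y) b = Φ x (Φ y b) := fun b => by rw [map_mul]; rfl
      rw [this, this, hy a, hx, hx (Φ y 0), map_mul, map_add, add_assoc]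
      rfl
  refine ⟨⟨fun p => Φ p 0, (groupCohomology.mem_cocycles₁_iff _).2 fun g h => ?_⟩, fun j g => ?_⟩
  · rw [← hΦ, map_mul]; rfl
  · change Φ (Monoid.CoprodI.of g) (0 : A) = f j g
    simp only [Φ, Monoid.CoprodI.lift_of]
    change A.ρ _ 0 + _ = _
    simp

lemma mem_coboundaries₁_iff {G : Type} [Group G] (A : Rep.{0} k G) (f : G → A) :
    f ∈ groupCohomology.coboundaries₁ A ↔ ∃ a : A, ∀ g, A.ρ g a - a = f g := by
  constructor
  · rintro ⟨a, ha⟩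
    exact ⟨a, fun g => congrFun ha g⟩
  · rintro ⟨a, ha⟩
    exact ⟨a, funext ha⟩

lemma glue_of_isZero (A : Rep.{0} k (Monoid.CoprodI Gs)) (h : IsZero (groupCohomology A 1)) :
    Glue A := by
  intro a
  have hc : ∀ j, (fun g => A.ρ (Monoid.CoprodI.of g) (a j) - a j) ∈ groupCohomology.cocycles₁ (Rep.res (Monoid.CoprodI.of (M := Gs) (i := j)) A) := by
    intro j
    apply groupCohomology.coboundaries₁_le_cocycles₁
    exact (mem_coboundaries₁_iff _ _).2 ⟨a j, fun g => rfl⟩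
  obtain ⟨F, hF⟩ := exists_cocycle A (fun j => ⟨_, hc j⟩)
  have h0 : groupCohomology.H1π A F = 0 := by
    have := ModuleCat.subsingleton_of_isZero h
    exact Subsingleton.elim _ _
  rw [groupCohomology.H1π_eq_zero_iff, mem_coboundaries₁_iff] at h0
  obtain ⟨b, hb⟩ := h0
  refine ⟨b, fun j g => ?_⟩
  have h1 := hF j g
  change _ = A.ρ (Monoid.CoprodI.of g) (a j) - a j at h1
  rw [← hb] at h1
  rw [map_sub, ← sub_eq_sub_iff_sub_eq_sub]
  exact h1

lemma glue_of_epi {A B : Rep.{0} k (Monoid.CoprodI Gs)} (p : A ⟶ B) [Epi p] (h : Glue A) : Glue B := by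
  have hs := (Rep.epi_iff_surjective p).1 inferInstance
  intro b
  choose a ha using fun j => hs (b j)
  obtain ⟨c, hc⟩ := h a
  refine ⟨p.hom c, fun j g => ?_⟩
  have := congrArg p.hom (hc j g)
  rw [Rep.hom_comm_apply, map_sub] at this
  rw [← ha j]
  exact this

noncomputable abbrev resj (A : Rep.{0} k (Monoid.CoprodI Gs)) (j : ι) : Rep.{0} k (Gs j) :=
  Rep.res (Monoid.CoprodI.of (M := Gs) (i := j)) A

theorem freeProd_one (A : Rep.{0} k (Monoid.CoprodI Gs)) (h : Glue A) :
    Nonempty (groupCohomology A 1 ≃ₗ[k] ∀ j, groupCohomology (resj A j) 1) := by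
  let L : groupCohomology.cocycles₁ A →ₗ[k] ∀ j, groupCohomology (resj A j) 1 :=
    LinearMap.pi fun j => (groupCohomology.H1π (resj A j)).hom ∘ₗ
      (groupCohomology.mapCocycles₁ (Monoid.CoprodI.of (M := Gs) (i := j)) (𝟙 (resj A j))).hom
  have hL : ∀ F j, L F j = groupCohomology.H1π (resj A j) (groupCohomology.mapCocycles₁ (Monoid.CoprodI.of (M := Gs) (i := j)) (𝟙 (resj A j)) F) := fun F j => rfl
  have hsurj : Function.Surjective L := by
    intro y
    have : ∀ j, ∃ f, groupCohomology.H1π (resj A j) f = y j := fun j =>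
      groupCohomology.H1_induction_on (y j) fun f => ⟨f, rfl⟩
    choose f hf using this
    obtain ⟨F, hF⟩ := exists_cocycle A f
    refine ⟨F, funext fun j => ?_⟩
    rw [hL, ← hf j]
    congr 1
    exact groupCohomology.cocycles₁_ext fun g => hF j g
  have hker : LinearMap.ker L = LinearMap.ker (groupCohomology.H1π A).hom := by
    ext F
    rw [LinearMap.mem_ker, LinearMap.mem_ker]
    change _ ↔ groupCohomology.H1π A F = 0
    rw [groupCohomology.H1π_eq_zero_iff, mem_coboundaries₁_iff, funext_iff]
    constructor
    · intro hF
      have : ∀ j, ∃ a : A, ∀ g : Gs j, A.ρ (Monoid.CoprodI.of g) a - a = F (Monoid.CoprodI.of g) := by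
        intro j
        have := hF j
        rw [hL] at this
        change groupCohomology.H1π (resj A j) _ = 0 at this
        rw [groupCohomology.H1π_eq_zero_iff, mem_coboundaries₁_iff] at this
        exact this
      choose a ha using this
      obtain ⟨b, hb⟩ := h a
      refine ⟨b, fun p => ?_⟩
      have hF := (groupCohomology.mem_cocycles₁_iff F.1).1 F.2
      change ∀ g h, F _ = A.ρ _ (F _) + F _ at hF
      induction p using Monoid.CoprodI.induction_on with
      | one => simp
      | of j g =>
        rw [← ha]
        have := hb j g
        rw [map_sub, ← sub_eq_sub_iff_sub_eq_sub] at this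
        exact this
      | mul x y hx hy =>
        rw [hF, ← hx, ← hy, map_mul, map_sub]
        change A.ρ x (A.ρ y b) - b = _
        abel
    · rintro ⟨b, hb⟩ j
      rw [hL]
      change groupCohomology.H1π (resj A j) _ = 0
      rw [groupCohomology.H1π_eq_zero_iff, mem_coboundaries₁_iff]
      exact ⟨b, fun g => hb _⟩
  have hsurj' : Function.Surjective (groupCohomology.H1π A).hom := fun y =>
    groupCohomology.H1_induction_on y fun f => ⟨f, rfl⟩
  exact ⟨((groupCohomology.H1π A).hom.quotKerEquivOfSurjective hsurj').symm ≪≫ₗ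
    Submodule.quotEquivOfEq _ _ hker.symm ≪≫ₗ L.quotKerEquivOfSurjective hsurj⟩

theorem freeProd_succ (n : ℕ) : ∀ (A : Rep.{0} k (Monoid.CoprodI Gs)), Glue A →
    Nonempty (groupCohomology A (n+1) ≃ₗ[k] ∀ j, groupCohomology (resj A j) (n+1)) := by
  induction n with
  | zero => exact freeProd_one
  | succ n ih =>
    intro A hA
    obtain ⟨e⟩ := ih (cokernel (toCoI A)) 
      (glue_of_epi (cokernel.π (toCoI A)) (glue_of_isZero _ (isZero_coI A 0)))
    refine ⟨(shiftRes (MonoidHom.id _) Function.injective_id A n).toLinearEquiv.symm ≪≫ₗ e ≪≫ₗ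
      LinearEquiv.piCongrRight fun j =>
        (shiftRes (Monoid.CoprodI.of (M := Gs) (i := j)) (Monoid.CoprodI.of_injective j) A n).toLinearEquiv⟩
end FreeProd
end TCP

namespace TCP
open CategoryTheory Limits
variable {k : Type} [CommRing k]

noncomputable abbrev resMap {G S : Type} [Group G] [Group S] (φ : S →* G) (A : Rep.{0} k G) (n : ℕ) :
    groupCohomology A n ⟶ groupCohomology (Rep.res φ A) n :=
  groupCohomology.map φ (𝟙 (Rep.res φ A)) n

noncomputable def cochSES {G S : Type} [Group G] [Group S] (φ : S →* G)
    (X : ShortComplex (Rep.{0} k G)) :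
    X.map (groupCohomology.cochainsFunctor k G) ⟶
      (X.map (Rep.resFunctor φ)).map (groupCohomology.cochainsFunctor k S) where
  τ₁ := groupCohomology.cochainsMap φ (𝟙 (Rep.res φ X.X₁))
  τ₂ := groupCohomology.cochainsMap φ (𝟙 (Rep.res φ X.X₂))
  τ₃ := groupCohomology.cochainsMap φ (𝟙 (Rep.res φ X.X₃))
  comm₁₂ := rfl
  comm₂₃ := rfl

lemma δ_res {G S : Type} [Group G] [Group S] (φ : S →* G)
    {X : ShortComplex (Rep.{0} k G)} (hX : X.ShortExact) (i : ℕ) :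
    groupCohomology.δ hX i (i+1) rfl ≫ resMap φ X.X₁ (i+1) =
      resMap φ X.X₃ i ≫ groupCohomology.δ ((Rep.shortExact_res φ).2 hX) i (i+1) rfl :=
  HomologicalComplex.HomologySequence.δ_naturality (cochSES φ X)
    (groupCohomology.map_cochainsFunctor_shortExact hX)
    (groupCohomology.map_cochainsFunctor_shortExact ((Rep.shortExact_res φ).2 hX)) i (i+1) rfl

lemma transfer_one {G S : Type} [Group G] [Group S] (φ : S →* G) [φ.range.FiniteIndex]
    (A : Rep.{0} k G) (x : groupCohomology A 1) (hx : resMap φ A 1 x = 0) :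
    φ.range.index • x = 0 := by
  revert hx
  refine groupCohomology.H1_induction_on x fun f hf => ?_
  have h1 : groupCohomology.H1π (Rep.res φ A) (groupCohomology.mapCocycles₁ φ (𝟙 (Rep.res φ A)) f) = 0 := by
    rw [← hf]
    exact (congr($(groupCohomology.H1π_comp_map φ (𝟙 (Rep.res φ A))) f)).symm
  rw [groupCohomology.H1π_eq_zero_iff, mem_coboundaries₁_iff] at h1
  obtain ⟨a, ha⟩ := h1
  change ∀ g, A.ρ (φ g) a - a = f (φ g) at ha
  rw [← map_nsmul, groupCohomology.H1π_eq_zero_iff, mem_coboundaries₁_iff]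
  have hF := (groupCohomology.mem_cocycles₁_iff f.1).1 f.2
  change ∀ g h, f _ = A.ρ _ (f _) + f _ at hF
  let f' : G → A := fun g => f g - (A.ρ g a - a)
  have hF' : ∀ g h, f' (g * h) = A.ρ g (f' h) + f' g := by
    intro g h
    simp only [f', hF, map_mul, map_sub]
    change _ - (A.ρ g (A.ρ h a) - a) = _
    abel
  have hS : ∀ s, f' (φ s) = 0 := fun s => by simp [f', ha]
  let q : G ⧸ φ.range → A := Quotient.lift f' (by
    intro x y hxy
    have hxy := QuotientGroup.leftRel_apply.1 hxy
    obtain ⟨s, hs⟩ := hxy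
    have : y = x * φ s := by rw [hs]; simp
    rw [this, hF', hS]; simp)
  have := Fintype.ofFinite (G ⧸ φ.range)
  let b : A := ∑ c, q c
  have hb : ∀ g, φ.range.index • f' g = b - A.ρ g b := by
    intro g
    have e1 : b = ∑ c, q (g • c) :=
      (Fintype.sum_equiv (MulAction.toPerm g) _ _ (fun c => rfl)).symm
    have e2 : ∀ c, q (g • c) = A.ρ g (q c) + f' g := by
      intro c
      induction c using QuotientGroup.induction_on with
      | H z => exact hF' g z
    simp only [e2, Finset.sum_add_distrib, Finset.sum_const, Finset.card_univ] at e1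
    rw [← map_sum] at e1
    rw [Subgroup.index, Nat.card_eq_fintype_card, eq_sub_iff_add_eq, add_comm]
    exact e1.symm
  refine ⟨φ.range.index • a - b, fun g => ?_⟩
  change _ = φ.range.index • f g
  have h2 : f g = f' g + (A.ρ g a - a) := by simp [f']
  rw [h2, smul_add, hb, map_sub, map_nsmul, smul_sub]
  abel

theorem transfer {G S : Type} [Group G] [Group S] (φ : S →* G) (hφ : Function.Injective φ)
    [φ.range.FiniteIndex] (n : ℕ) :
    ∀ (A : Rep.{0} k G) (x : groupCohomology A (n+1)), resMap φ A (n+1) x = 0 →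
    φ.range.index • x = 0 := by
  induction n with
  | zero => exact transfer_one φ
  | succ n ih =>
    intro A x hx
    have hepi : Epi (groupCohomology.δ (ses_exact A) (n+1) (n+2) rfl) :=
      groupCohomology.epi_δ_of_isZero (ses_exact A) (n+1) (isZero_coI A (n+1))
    obtain ⟨y, rfl⟩ := (ModuleCat.epi_iff_surjective _).1 hepi x
    have hmono : Mono (groupCohomology.δ (res_ses_exact φ A) (n+1) (n+2) rfl) :=
      groupCohomology.mono_δ_of_isZero (res_ses_exact φ A) (n+1) (isZero_res_coI φ hφ A n)
    have h1 : groupCohomology.δ (res_ses_exact φ A) (n+1) (n+2) rfl (resMap φ _ (n+1) y) = 0 :=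
      (congr($(δ_res φ (ses_exact A) (n+1)) y)).symm.trans hx
    have h2 : resMap φ (cokernel (toCoI A)) (n+1) y = 0 := 
      (ModuleCat.mono_iff_injective _).1 hmono (h1.trans (map_zero _).symm)
    rw [← map_nsmul, ih _ y h2, map_zero]

end TCP

namespace TCP
open CategoryTheory Limits
variable {k : Type} [CommRing k] {V : Type} [AddCommGroup V] [Module k V]

variable (k V) in
/-- functoriality for trivial coefficients -/
noncomputable abbrev tmap {G S : Type} [Group G] [Group S] (φ : S →* G) (n : ℕ) :
    groupCohomology (Rep.trivial k G V) n ⟶ groupCohomology (Rep.trivial k S V) n :=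
  groupCohomology.map φ (𝟙 (Rep.trivial k S V)) n

lemma tmap_comp {G S R : Type} [Group G] [Group S] [Group R] (φ : S →* G) (ψ : R →* S) (n : ℕ) :
    tmap k V (φ.comp ψ) n = tmap k V φ n ≫ tmap k V ψ n :=
  groupCohomology.map_comp (A := Rep.trivial k G V) (B := Rep.trivial k S V)
    (C := Rep.trivial k R V) φ ψ (𝟙 (Rep.trivial k S V)) (𝟙 (Rep.trivial k R V)) n

lemma tmap_id {G : Type} [Group G] (n : ℕ) : tmap k V (MonoidHom.id G) n = 𝟙 _ :=
  groupCohomology.map_id _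

lemma tmap_one {G S : Type} [Group G] [Group S] (n : ℕ) :
    tmap k V (1 : S →* G) (n+1) = 0 := by
  have : (1 : S →* G) = (1 : Unit →* G).comp (1 : S →* Unit) := by ext; simp
  rw [this, tmap_comp]
  have h0 : tmap k V (1 : Unit →* G) (n+1) = 0 :=
    (isZero_groupCohomology_succ_of_subsingleton (Rep.trivial k Unit V) n).eq_zero_of_tgt _
  rw [h0, zero_comp]

theorem abelian_decomp {M : Type} [Group M] [Finite M] (hM : ∀ x y : M, x * y = y * x)
    {K : Type} [Finite K] (Q : K → Type) [∀ j, Group (Q j)] (f : ∀ j, Q j →* M)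
    (hf : ∀ j, Function.Injective (f j))
    (h1 : ∀ i j, i ≠ j → (Nat.card (Q i)).Coprime (Nat.card (Q j)))
    (h2 : ∀ p : ℕ, p.Prime → p ∣ Nat.card M → ∃ j, ¬ p ∣ (f j).range.index) (n : ℕ) :
    Nonempty (groupCohomology (Rep.trivial k M V) (n+1) ≃ₗ[k]
      ∀ j, groupCohomology (Rep.trivial k (Q j) V) (n+1)) := by
  classical
  have := Fintype.ofFinite K
  have hcard : ∀ j, Nat.card (f j).range = Nat.card (Q j) := fun j =>
    (Nat.card_congr (MonoidHom.ofInjective (hf j)).toEquiv).symm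
  have hmul : ∀ j, Nat.card (Q j) * (f j).range.index = Nat.card M := fun j => by
    rw [← hcard, Subgroup.card_mul_index]
  -- projections
  have hproj : ∀ j, ∃ e : M →* Q j, e.comp (f j) = MonoidHom.id _ ∧ ∀ i, i ≠ j → e.comp (f i) = 1 := by
    intro j
    have hcop : (Nat.card (Q j)).Coprime (f j).range.index := by
      refine Nat.Coprime.symm (Nat.coprime_of_dvd fun p hp hp1 hp2 => ?_)
      obtain ⟨l, hl⟩ := h2 p hp ((hmul j) ▸ hp2.mul_right _)
      have hpl : p ∣ Nat.card (Q l) := by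
        have : p ∣ Nat.card (Q l) * (f l).range.index := by rw [hmul, ← hmul j]; exact hp2.mul_right _
        exact (hp.dvd_mul.1 this).resolve_right hl
      have hlj : l ≠ j := by rintro rfl; exact hl hp1
      exact hp.one_lt.ne' (Nat.dvd_one.1 ((h1 l j hlj) ▸ Nat.dvd_gcd hpl hp2))
    obtain ⟨e, he1, he2⟩ := Nat.chineseRemainder hcop 1 0
    have hnorm : (f j).range.Normal := ⟨fun a ha g => by rw [hM g a]; simpa using ha⟩
    have hmem : ∀ x : M, x ^ e ∈ (f j).range := by
      intro x
      obtain ⟨c, rfl⟩ := (Nat.modEq_zero_iff_dvd).1 he2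
      rw [pow_mul]
      exact Subgroup.pow_mem _ (Subgroup.pow_index_mem _ x) _
    let E : M →* (f j).range :=
      { toFun := fun x => ⟨x ^ e, hmem x⟩
        map_one' := by ext; simp
        map_mul' := fun x y => by ext; exact Commute.mul_pow (hM x y) e }
    let T := MonoidHom.ofInjective (hf j)
    have hT : ∀ y, ((T y : (f j).range) : M) = f j y := fun y => rfl
    refine ⟨T.symm.toMonoidHom.comp E, ?_, ?_⟩
    · ext y
      apply T.injective
      apply Subtype.ext
      change ((T (T.symm (E (f j y))) : (f j).range) : M) = _
      rw [MulEquiv.apply_symm_apply]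
      change (f j y) ^ e = f j y
      rw [← map_pow, ← pow_mod_natCard, he1, pow_mod_natCard, pow_one]
    · intro i hij
      ext y
      apply T.injective
      apply Subtype.ext
      change ((T (T.symm (E (f i y))) : (f j).range) : M) = ((T 1 : (f j).range) : M)
      rw [MulEquiv.apply_symm_apply, map_one]
      change (f i y) ^ e = 1
      have hd : Nat.card (Q i) ∣ (f j).range.index := by
        refine (h1 i j hij).dvd_of_dvd_mul_left ?_
        rw [hmul j, ← hmul i]; exact Dvd.intro _ rfl
      obtain ⟨c, hc⟩ := hd.trans ((Nat.modEq_zero_iff_dvd).1 he2)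
      rw [← map_pow, hc, pow_mul, pow_card_eq_one', one_pow, map_one]
  choose e he1 he2 using hproj
  let L : groupCohomology (Rep.trivial k M V) (n+1) →ₗ[k]
      ∀ j, groupCohomology (Rep.trivial k (Q j) V) (n+1) :=
    LinearMap.pi fun j => (tmap k V (f j) (n+1)).hom
  have hL : ∀ x j, L x j = tmap k V (f j) (n+1) x := fun _ _ => rfl
  refine ⟨LinearEquiv.ofBijective L ⟨?_, ?_⟩⟩
  · rw [injective_iff_map_eq_zero]
    intro x hx
    have hx' : ∀ j, (f j).range.index • x = 0 := fun j =>
      transfer (f j) (hf j) n (Rep.trivial k M V) x (congrFun hx j)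
    have hcM : Nat.card M • x = 0 := by
      have ht := transfer (1 : Unit →* M) (fun _ _ _ => rfl) n (Rep.trivial k M V) x
        (by
          have := ModuleCat.subsingleton_of_isZero
            (isZero_groupCohomology_succ_of_subsingleton (Rep.res (1 : Unit →* M) (Rep.trivial k M V)) n)
          exact Subsingleton.elim _ _)
      have : (1 : Unit →* M).range = ⊥ := by ext; simp
      rw [this, Subgroup.index_bot] at ht
      exact ht
    by_contra hne
    have hone : addOrderOf x ≠ 1 := fun h => hne (AddMonoid.addOrderOf_eq_one_iff.1 h)
    obtain ⟨p, hp, hpx⟩ := Nat.exists_prime_and_dvd hone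
    obtain ⟨j, hj⟩ := h2 p hp (hpx.trans (addOrderOf_dvd_of_nsmul_eq_zero hcM))
    exact hj (hpx.trans (addOrderOf_dvd_of_nsmul_eq_zero (hx' j)))
  · intro y
    refine ⟨∑ j, tmap k V (e j) (n+1) (y j), funext fun i => ?_⟩
    rw [hL, map_sum, Finset.sum_eq_single i]
    · have := congr($(tmap_comp (k := k) (V := V) (e i) (f i) (n+1)) (y i))
      rw [he1, tmap_id] at this
      exact this.symm
    · intro j _ hj
      have := congr($(tmap_comp (k := k) (V := V) (e j) (f i) (n+1)) (y j))
      rw [he2 j i hj.symm, tmap_one] at this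
      exact this.symm
    · simp

theorem abelian_decomp_add {M : Type} [Group M] [Finite M] (hM : ∀ x y : M, x * y = y * x)
    {K : Type} [Finite K] (Q : K → Type) [∀ j, Group (Q j)] (f : ∀ j, Q j →* M)
    (hf : ∀ j, Function.Injective (f j))
    (h1 : ∀ i j, i ≠ j → (Nat.card (Q i)).Coprime (Nat.card (Q j)))
    (h2 : ∀ p : ℕ, p.Prime → p ∣ Nat.card M → ∃ j, ¬ p ∣ (f j).range.index) (n : ℕ) :
    Nonempty (groupCohomology (Rep.trivial k M V) (n+1) ≃+
      ∀ j, groupCohomology (Rep.trivial k (Q j) V) (n+1)) :=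
  ⟨(abelian_decomp (k := k) (V := V) hM Q f hf h1 h2 n).some.toAddEquiv⟩

theorem freeProd_add {ι : Type} {Gs : ι → Type} [∀ j, Group (Gs j)] (n : ℕ)
    (A : Rep.{0} k (Monoid.CoprodI Gs)) (h : Glue A) :
    Nonempty (groupCohomology A (n+1) ≃+ ∀ j, groupCohomology (resj A j) (n+1)) :=
  ⟨(freeProd_succ n A h).some.toAddEquiv⟩

end TCP

/-- For a finite nonabelian transitively commutative group `G` with trivial
center whose maximal abelian subgroups are `M 1, …, M N`, the group cohomology
(with trivial `ℤ` coefficients) of the free product `P` of the `M j` in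
positive degrees is the direct sum, over the primes `p` dividing `|G|` and the
Sylow `p`-subgroups `Q` of `G`, of the cohomology of `Q`. -/
theorem tc_free_product_cohomology_eq_directSum_of_sylow_cohomology
    (G : Type) [Group G] [Fintype G]
    (hnonab : ¬ ∀ a b : G, a * b = b * a)
    (hTC : ∀ g : G, g ∉ Subgroup.center G →
      ∀ x ∈ Subgroup.centralizer {g}, ∀ y ∈ Subgroup.centralizer {g}, x * y = y * x)
    (hZ : Subgroup.center G = ⊥)
    (N : ℕ) (M : Fin N → Subgroup G)
    (hinj : Function.Injective M)
    (hmax : ∀ j, (∀ x ∈ M j, ∀ y ∈ M j, x * y = y * x) ∧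
      ∀ N' : Subgroup G, (∀ x ∈ N', ∀ y ∈ N', x * y = y * x) → M j ≤ N' → M j = N')
    (hall : ∀ N' : Subgroup G,
      ((∀ x ∈ N', ∀ y ∈ N', x * y = y * x) ∧
        ∀ N'' : Subgroup G, (∀ x ∈ N'', ∀ y ∈ N'', x * y = y * x) → N' ≤ N'' → N' = N'') →
      ∃ j, N' = M j)
    (i : ℕ) (hi : 0 < i) :
    Nonempty
      (↥(groupCohomology (Rep.trivial ℤ (Monoid.CoprodI fun j : Fin N => ↥(M j)) ℤ) i) ≃+
        ⨁ (x : Σ p : {p : ℕ // p.Prime ∧ p ∣ Fintype.card G}, Sylow p.1 G),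
          ↥(groupCohomology (Rep.trivial ℤ ↥(x.2 : Subgroup G) ℤ) i)) := by
  classical
  obtain ⟨n, rfl⟩ : ∃ n, i = n + 1 := ⟨i - 1, by omega⟩
  have hcent : ∀ g : G, g ≠ 1 → ∀ j, g ∈ M j → M j = Subgroup.centralizer {g} := by
    intro g hg j hj
    refine (hmax j).2 _ (hTC g (by rw [hZ]; simpa using hg)) fun x hx => ?_
    rw [Subgroup.mem_centralizer_singleton_iff]
    exact (hmax j).1 _ hx _ hj
  have hex : ∀ g : G, g ≠ 1 → ∃ j, Subgroup.centralizer {g} = M j := by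
    intro g hg
    refine hall _ ⟨hTC g (by rw [hZ]; simpa using hg), fun N'' hN hle => le_antisymm hle fun x hx => ?_⟩
    rw [Subgroup.mem_centralizer_singleton_iff]
    exact hN _ hx _ (hle (Subgroup.mem_centralizer_singleton_iff.2 rfl))
  let X := Σ p : {p : ℕ // p.Prime ∧ p ∣ Fintype.card G}, Sylow p.1 G
  have hX : Finite X := by
    have : Finite {p : ℕ // p.Prime ∧ p ∣ Fintype.card G} :=
      Set.Finite.to_subtype ((Nat.divisors (Fintype.card G)).finite_toSet.subset
        fun p hp => by simpa using hp.2)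
    infer_instance
  have hQj : ∀ x : X, ∃! j, (x.2 : Subgroup G) ≤ M j := by
    rintro ⟨⟨p, hp, hpG⟩, Q⟩
    have : Fact p.Prime := ⟨hp⟩
    have hnt : Nontrivial (Q : Subgroup G) := by
      rw [Subgroup.nontrivial_iff_ne_bot]
      exact Q.ne_bot_of_dvd_card (by rwa [Nat.card_eq_fintype_card])
    have := Q.isPGroup'.center_nontrivial
    obtain ⟨⟨⟨z, hzQ⟩, hzc⟩, hz1⟩ := exists_ne (1 : Subgroup.center (Q : Subgroup G))
    have hz : z ≠ 1 := by rintro rfl; exact hz1 rfl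
    obtain ⟨j, hj⟩ := hex z hz
    have hle : (Q : Subgroup G) ≤ M j := by
      intro y hy
      rw [← hj, Subgroup.mem_centralizer_singleton_iff]
      exact congrArg Subtype.val (Subgroup.mem_center_iff.1 hzc ⟨y, hy⟩)
    refine ⟨j, hle, fun j' hj' => hinj ?_⟩
    rw [← hj]
    exact hcent z hz j' (hj' hzQ)
  choose J hJ hJu using hQj
  -- decomposition of each maximal abelian subgroup
  have hdec : ∀ j, Nonempty (groupCohomology (Rep.trivial ℤ (M j) ℤ) (n+1) ≃+
      ∀ x : {x : X // J x = j}, groupCohomology (Rep.trivial ℤ (x.1.2 : Subgroup G) ℤ) (n+1)) := by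
    intro j
    have hle : ∀ x : {x : X // J x = j}, (x.1.2 : Subgroup G) ≤ M j := fun x => by
      have := hJ x.1
      rwa [x.2] at this
    refine TCP.abelian_decomp_add (k := ℤ) (V := ℤ) (fun x y => Subtype.ext ((hmax j).1 x x.2 y y.2))
      (fun x : {x : X // J x = j} => ((x.1.2 : Subgroup G) : Type))
      (fun x => Subgroup.inclusion (hle x)) (fun x => Subgroup.inclusion_injective _) ?_ ?_ n
    · rintro ⟨⟨⟨p, hp, hpG⟩, Q⟩, hx⟩ ⟨⟨⟨q, hq, hqG⟩, R⟩, hy⟩ hne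
      have : Fact p.Prime := ⟨hp⟩
      have : Fact q.Prime := ⟨hq⟩
      by_cases hpq : p = q
      · subst hpq
        exfalso
        apply hne
        have hQ : (Q : Subgroup G) ≤ M j := hle ⟨⟨⟨p, hp, hpG⟩, Q⟩, hx⟩
        have hR : (R : Subgroup G) ≤ M j := hle ⟨⟨⟨p, hp, hqG⟩, R⟩, hy⟩
        have hnorm : ((Q.subtype hQ : Sylow p (M j)) : Subgroup (M j)).Normal :=
          ⟨fun a ha g => by
            have : g * a * g⁻¹ = a := by
              rw [mul_inv_eq_iff_eq_mul]
              exact Subtype.ext ((hmax j).1 g g.2 a a.2)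
            rwa [this]⟩
        have : Subsingleton (Sylow p (M j)) := (Sylow.unique_of_normal _ hnorm).instSubsingleton
        have h3 : Q.subtype hQ = R.subtype hR := Subsingleton.elim _ _
        have h4 : Q = R := Sylow.subtype_injective h3
        subst h4
        rfl
      · obtain ⟨a, ha⟩ := Q.isPGroup'.exists_card_eq
        obtain ⟨b, hb⟩ := R.isPGroup'.exists_card_eq
        change (Nat.card (Q : Subgroup G)).Coprime (Nat.card (R : Subgroup G))
        rw [ha, hb]
        exact Nat.Coprime.pow _ _ ((Nat.coprime_primes hp hq).2 hpq)
    · intro p hp hpM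
      have : Fact p.Prime := ⟨hp⟩
      obtain ⟨z, hz⟩ := exists_prime_orderOf_dvd_card' p hpM
      have hz1 : (z : G) ≠ 1 := by
        intro h
        have : z = 1 := Subtype.ext h
        rw [this, orderOf_one] at hz
        exact hp.one_lt.ne hz
      have hpG : p ∣ Fintype.card G := by
        rw [← Nat.card_eq_fintype_card]
        exact hpM.trans (Subgroup.card_subgroup_dvd_card _)
      have hzp : IsPGroup p (Subgroup.zpowers (z : G)) := by
        apply IsPGroup.of_card (n := 1)
        rw [Nat.card_zpowers, Subgroup.orderOf_coe, hz, pow_one]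
      obtain ⟨Q, hQ⟩ := hzp.exists_le_sylow
      have hzQ : (z : G) ∈ (Q : Subgroup G) := hQ (Subgroup.mem_zpowers _)
      have hJQ : J ⟨⟨p, hp, hpG⟩, Q⟩ = j := by
        apply hinj
        exact (hcent _ hz1 _ (hJ ⟨⟨p, hp, hpG⟩, Q⟩ hzQ)).trans (hcent _ hz1 _ z.2).symm
      refine ⟨⟨⟨⟨p, hp, hpG⟩, Q⟩, hJQ⟩, fun hdvd => ?_⟩
      have h5 : (Subgroup.inclusion (hle ⟨⟨⟨p, hp, hpG⟩, Q⟩, hJQ⟩)).range.index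
          ∣ (Q : Subgroup G).index := by
        rw [Subgroup.inclusion_range]
        exact Subgroup.relIndex_dvd_index_of_le (hle ⟨⟨⟨p, hp, hpG⟩, Q⟩, hJQ⟩)
      exact Q.not_dvd_index (hdvd.trans h5)
  obtain ⟨e1⟩ := TCP.freeProd_add (k := ℤ) n
    (Rep.trivial ℤ (Monoid.CoprodI fun j : Fin N => ↥(M j)) ℤ)
    (fun a => ⟨0, fun j g => rfl⟩)
  have e2 : ∀ j, groupCohomology (Rep.trivial ℤ (M j) ℤ) (n+1) ≃+
      ∀ x : {x : X // J x = j}, groupCohomology (Rep.trivial ℤ (x.1.2 : Subgroup G) ℤ) (n+1) :=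
    fun j => (hdec j).some
  let Y : X → Type := fun x => groupCohomology (Rep.trivial ℤ (x.2 : Subgroup G) ℤ) (n+1)
  let e3 : (∀ j, ∀ x : {x : X // J x = j}, Y x.1) ≃+ ∀ x : X, Y x :=
    { toFun := fun f x => f (J x) ⟨x, rfl⟩
      invFun := fun f j x => f x.1
      left_inv := fun f => by
        funext j ⟨x, hx⟩
        subst hx
        rfl
      right_inv := fun f => rfl
      map_add' := fun f g => rfl }
  have := Fintype.ofFinite X
  exact ⟨e1.trans ((AddEquiv.piCongrRight e2).trans
    (e3.trans (DirectSum.addEquivProd Y).symm))⟩
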